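/- arXiv:2602.05172 — 4 statements merged into one kernel-verified Lean document; each statement's English description precedes it below -/
import Mathlib

section
/- Assume k : ℝ^d × ℝ^d → ℝ is a symmetric kernel such that every Gram matrix (k(xⁱ,xʲ))_{i,j=1}^N is positive semidefinite and k together with all its partial derivatives up to order 2 is bounded in absolute value by B ∈ (0,∞). Assume V : ℝ^d → ℝ is differentiable with V(x) > 0 and ‖∇V(x)‖ ≤ A·V(x)^α for all x, where A > 0 and α ∈ [0,1/2]. Let ν ∈ (0,1] and x̲ = (x¹,…,x^N) ∈ (ℝ^d)^N. Then the R-SVGD vector field satisfies ‖𝖳_ν(x̲)‖² ≤ 2A²B²((1−ν)B+ν)⁻²·N·((1/N)Σ_{i=1}^N V(xⁱ))^{2α} + 2ν⁻²·N·d·B², where ‖·‖ is the Euclidean norm on (ℝ^d)^N ≅ ℝ^{dN}. -/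
noncomputable section

/-- Basis directions of `ℝ^d × ℝ^d`, used to express the partial derivatives of a kernel
`k : ℝ^d × ℝ^d → ℝ` with respect to each coordinate of each of its two arguments. -/
def pairBasis (d : ℕ) :
    (Fin d ⊕ Fin d) → EuclideanSpace ℝ (Fin d) × EuclideanSpace ℝ (Fin d) :=
  Sum.elim (fun i => (EuclideanSpace.single i 1, 0)) (fun i => (0, EuclideanSpace.single i 1))

/-- The R-SVGD vector field `𝖳_ν(x̲)`: its `i`-th block is
`Σ_l (((1−ν)K/N + ν I_N)⁻¹)_{i,l} · (1/N) Σ_j (k(x^l,x^j) ∇V(x^j) − ∇₂k(x^l,x^j))`,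
where `K = (k(x^a,x^b))_{a,b}` is the Gram matrix. -/
def steinField (d N : ℕ) (k : EuclideanSpace ℝ (Fin d) → EuclideanSpace ℝ (Fin d) → ℝ)
    (V : EuclideanSpace ℝ (Fin d) → ℝ) (ν : ℝ)
    (x : Fin N → EuclideanSpace ℝ (Fin d)) : Fin N → EuclideanSpace ℝ (Fin d) :=
  fun i => ∑ l : Fin N,
    ((((1 - ν) / (N : ℝ)) • Matrix.of (fun a b : Fin N => k (x a) (x b)) +
        ν • (1 : Matrix (Fin N) (Fin N) ℝ))⁻¹ i l) •
      ((N : ℝ)⁻¹ •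
        ∑ j : Fin N, (k (x l) (x j) • gradient V (x j) - gradient (k (x l)) (x j)))

open Matrix in
lemma aux_expand {N : ℕ} (P : Matrix (Fin N) (Fin N) ℝ) (t ν : ℝ) (z : Fin N → ℝ) :
    ((t • P + ν • (1 : Matrix (Fin N) (Fin N) ℝ)) *ᵥ z) ⬝ᵥ
      ((t • P + ν • (1 : Matrix (Fin N) (Fin N) ℝ)) *ᵥ z) =
    t ^ 2 * ((P *ᵥ z) ⬝ᵥ (P *ᵥ z)) + 2 * t * ν * (z ⬝ᵥ (P *ᵥ z)) + ν ^ 2 * (z ⬝ᵥ z) := by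
  have h : (t • P + ν • (1 : Matrix (Fin N) (Fin N) ℝ)) *ᵥ z = t • (P *ᵥ z) + ν • z := by
    rw [Matrix.add_mulVec, Matrix.smul_mulVec, Matrix.smul_mulVec, Matrix.one_mulVec]
  rw [h]
  simp only [add_dotProduct, dotProduct_add, smul_dotProduct, dotProduct_smul, smul_eq_mul]
  rw [dotProduct_comm (P *ᵥ z) z]
  ring

open Matrix in
lemma aux_sq {N : ℕ} (P : Matrix (Fin N) (Fin N) ℝ) (B : ℝ) (hB : 0 < B) (hsymm : Pᵀ = P)
    (hpos : ∀ y : Fin N → ℝ, 0 ≤ y ⬝ᵥ (P *ᵥ y))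
    (hle : ∀ y : Fin N → ℝ, y ⬝ᵥ (P *ᵥ y) ≤ B * (y ⬝ᵥ y)) (z : Fin N → ℝ) :
    (P *ᵥ z) ⬝ᵥ (P *ᵥ z) ≤ B * (z ⬝ᵥ (P *ᵥ z)) := by
  have h1 := hpos (z - B⁻¹ • (P *ᵥ z))
  have h2 := hle (P *ᵥ z)
  have h3 : z ⬝ᵥ (P *ᵥ (P *ᵥ z)) = (P *ᵥ z) ⬝ᵥ (P *ᵥ z) := by
    rw [Matrix.dotProduct_mulVec, ← Matrix.mulVec_transpose, hsymm]
  simp only [Matrix.mulVec_sub, Matrix.mulVec_smul, sub_dotProduct, dotProduct_sub,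
    smul_dotProduct, dotProduct_smul, smul_eq_mul, h3] at h1
  have h4 : B⁻¹ * (B⁻¹ * ((P *ᵥ z) ⬝ᵥ (P *ᵥ (P *ᵥ z)))) ≤ B⁻¹ * ((P *ᵥ z) ⬝ᵥ (P *ᵥ z)) := by
    apply mul_le_mul_of_nonneg_left _ (by positivity)
    rw [inv_mul_le_iff₀ hB]
    exact h2
  have h5 : B⁻¹ * ((P *ᵥ z) ⬝ᵥ (P *ᵥ z)) ≤ z ⬝ᵥ (P *ᵥ z) := by linarith
  rwa [inv_mul_le_iff₀ hB] at h5

open Matrix in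
/-- Main scalar estimates for the regularised inverse. -/
lemma aux_main {N : ℕ} (P : Matrix (Fin N) (Fin N) ℝ) (B ν : ℝ) (hB : 0 < B) (hsymm : Pᵀ = P)
    (hpos : ∀ y : Fin N → ℝ, 0 ≤ y ⬝ᵥ (P *ᵥ y))
    (hle : ∀ y : Fin N → ℝ, y ⬝ᵥ (P *ᵥ y) ≤ B * (y ⬝ᵥ y)) (hν : 0 < ν) (hν1 : ν ≤ 1)
    (M : Matrix (Fin N) (Fin N) ℝ) (hM : M = (1 - ν) • P + ν • (1 : Matrix (Fin N) (Fin N) ℝ))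
    (u g : Fin N → ℝ) :
    (M⁻¹ *ᵥ (P *ᵥ u - g)) ⬝ᵥ (M⁻¹ *ᵥ (P *ᵥ u - g)) ≤
      2 * (B ^ 2 / ((1 - ν) * B + ν) ^ 2 * (u ⬝ᵥ u)) + 2 * ((g ⬝ᵥ g) / ν ^ 2) := by
  have ht : 0 ≤ 1 - ν := by linarith
  have hD : 0 < (1 - ν) * B + ν := by positivity
  have hself : ∀ y : Fin N → ℝ, 0 ≤ y ⬝ᵥ y := fun y =>
    Finset.sum_nonneg fun i _ => mul_self_nonneg (y i)
  have h2 : ∀ z : Fin N → ℝ, ν ^ 2 * (z ⬝ᵥ z) ≤ (M *ᵥ z) ⬝ᵥ (M *ᵥ z) := by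
    intro z
    rw [hM, aux_expand]
    have a1 := mul_nonneg (sq_nonneg (1 - ν)) (hself (P *ᵥ z))
    have a2 := mul_nonneg (mul_nonneg (mul_nonneg zero_le_two ht) hν.le) (hpos z)
    linarith
  have h1 : ∀ z : Fin N → ℝ, ((1 - ν) * B + ν) ^ 2 * ((P *ᵥ z) ⬝ᵥ (P *ᵥ z)) ≤
      B ^ 2 * ((M *ᵥ z) ⬝ᵥ (M *ᵥ z)) := by
    intro z
    rw [hM, aux_expand]
    have b1 := aux_sq P B hB hsymm hpos hle z
    have b2 := mul_le_mul_of_nonneg_left (hle z) hB.le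
    have c1 := mul_le_mul_of_nonneg_left b1
      (mul_nonneg (mul_nonneg (mul_nonneg zero_le_two ht) hν.le) hB.le)
    have c2 := mul_le_mul_of_nonneg_left (b1.trans b2) (sq_nonneg ν)
    nlinarith
  have hunit : IsUnit M := by
    rw [← Matrix.mulVec_injective_iff_isUnit]
    intro y y' hyy
    have h := h2 (y - y')
    have h0 : M *ᵥ (y - y') = 0 := by rw [Matrix.mulVec_sub, sub_eq_zero]; exact hyy
    rw [h0, zero_dotProduct] at h
    have h3 : (y - y') ⬝ᵥ (y - y') = 0 := by
      apply le_antisymm _ (hself _)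
      by_contra hc
      push Not at hc
      have : 0 < ν ^ 2 * ((y - y') ⬝ᵥ (y - y')) := by positivity
      linarith
    exact sub_eq_zero.mp (dotProduct_self_eq_zero.mp h3)
  have hdet : IsUnit M.det := (Matrix.isUnit_iff_isUnit_det M).mp hunit
  have hMi : ∀ y, M *ᵥ (M⁻¹ *ᵥ y) = y := fun y => by
    rw [Matrix.mulVec_mulVec, Matrix.mul_nonsing_inv _ hdet, Matrix.one_mulVec]
  have hMi' : ∀ y, M⁻¹ *ᵥ (M *ᵥ y) = y := fun y => by
    rw [Matrix.mulVec_mulVec, Matrix.nonsing_inv_mul _ hdet, Matrix.one_mulVec]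
  have hcomm : M⁻¹ *ᵥ (P *ᵥ u) = P *ᵥ (M⁻¹ *ᵥ u) := by
    have hc : P * M = M * P := by rw [hM]; simp [mul_add, add_mul]
    conv_lhs => rw [← hMi u]
    rw [Matrix.mulVec_mulVec (M := P), hc, ← Matrix.mulVec_mulVec (M := M), hMi']
  have e1 := h1 (M⁻¹ *ᵥ u)
  have e2 := h2 (M⁻¹ *ᵥ g)
  rw [hMi] at e1 e2
  rw [Matrix.mulVec_sub, hcomm]
  set a := P *ᵥ (M⁻¹ *ᵥ u)
  set b := M⁻¹ *ᵥ g
  have f1 : a ⬝ᵥ a ≤ B ^ 2 / ((1 - ν) * B + ν) ^ 2 * (u ⬝ᵥ u) := by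
    rw [div_mul_eq_mul_div, le_div_iff₀ (by positivity)]; linarith
  have f2 : b ⬝ᵥ b ≤ (g ⬝ᵥ g) / ν ^ 2 := by
    rw [le_div_iff₀ (by positivity)]; linarith
  have f3 := hself (a + b)
  simp only [add_dotProduct, dotProduct_add, sub_dotProduct, dotProduct_sub] at f3 ⊢
  linarith

open Matrix in
lemma aux_quad {N : ℕ} (hN : 0 < N) (K : Matrix (Fin N) (Fin N) ℝ) (B : ℝ)
    (hK : ∀ a b, |K a b| ≤ B) (hB : 0 < B) (y : Fin N → ℝ) :
    y ⬝ᵥ (((N : ℝ)⁻¹ • K) *ᵥ y) ≤ B * (y ⬝ᵥ y) := by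
  have hN' : (0 : ℝ) < N := by exact_mod_cast hN
  rw [Matrix.smul_mulVec, dotProduct_smul, smul_eq_mul, inv_mul_le_iff₀ hN']
  have h1 : y ⬝ᵥ (K *ᵥ y) ≤ B * (∑ i, |y i|) ^ 2 := by
    simp only [dotProduct, Matrix.mulVec]
    rw [sq, Finset.sum_mul, Finset.mul_sum]
    refine Finset.sum_le_sum fun i _ => ?_
    rw [Finset.mul_sum, Finset.mul_sum, Finset.mul_sum]
    refine Finset.sum_le_sum fun j _ => ?_
    calc y i * (K i j * y j) ≤ |y i * (K i j * y j)| := le_abs_self _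
      _ = |K i j| * (|y i| * |y j|) := by rw [abs_mul, abs_mul]; ring
      _ ≤ _ := mul_le_mul_of_nonneg_right (hK i j) (by positivity)
  have h2 : (∑ i, |y i|) ^ 2 ≤ N * (y ⬝ᵥ y) := by
    have := sq_sum_le_card_mul_sum_sq (s := Finset.univ) (f := fun i => |y i|)
    simpa [dotProduct, sq_abs, ← sq] using this
  calc _ ≤ _ := h1
    _ ≤ B * (N * (y ⬝ᵥ y)) := mul_le_mul_of_nonneg_left h2 hB.le
    _ = _ := by ring

lemma aux_jensen {N : ℕ} (hN : 0 < N) (v : Fin N → ℝ) (hv : ∀ i, 0 < v i) (p : ℝ)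
    (hp0 : 0 ≤ p) (hp1 : p ≤ 1) :
    ∑ i, v i ^ p ≤ N * ((N : ℝ)⁻¹ * ∑ i, v i) ^ p := by
  have hN' : (0 : ℝ) < N := by exact_mod_cast hN
  have h := (Real.concaveOn_rpow hp0 hp1).le_map_sum (t := Finset.univ)
    (w := fun _ : Fin N => (N : ℝ)⁻¹) (p := v) (fun _ _ => by positivity)
    (by simp [hN'.ne']) (fun i _ => (hv i).le)
  simp only [smul_eq_mul, ← Finset.mul_sum] at h
  rwa [inv_mul_le_iff₀ hN'] at h

lemma aux_grad {d : ℕ} (k : EuclideanSpace ℝ (Fin d) → EuclideanSpace ℝ (Fin d) → ℝ)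
    (hkC2 : ContDiff ℝ 2 (fun p : EuclideanSpace ℝ (Fin d) × EuclideanSpace ℝ (Fin d) =>
      k p.1 p.2)) (x y : EuclideanSpace ℝ (Fin d)) (c : Fin d) :
    gradient (k x) y c =
      fderiv ℝ (fun q : EuclideanSpace ℝ (Fin d) × EuclideanSpace ℝ (Fin d) => k q.1 q.2) (x, y)
        (pairBasis d (Sum.inr c)) := by
  have hd : HasFDerivAt (fun q : EuclideanSpace ℝ (Fin d) × EuclideanSpace ℝ (Fin d) =>
      k q.1 q.2) _ (x, y) := (hkC2.differentiable (by norm_num) (x, y)).hasFDerivAt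
  have h2 := hd.comp y (hasFDerivAt_prodMk_right (𝕜 := ℝ) x y)
  have h3 : fderiv ℝ (k x) y = _ := h2.fderiv
  have h4 : gradient (k x) y c = inner ℝ (gradient (k x) y) (EuclideanSpace.single c (1 : ℝ)) := by
    rw [EuclideanSpace.inner_single_right]; simp
  rw [h4, gradient, InnerProductSpace.toDual_symm_apply, h3]
  simp [pairBasis]

/-- Norm bound on the R-SVGD vector field:
`‖𝖳_ν(x̲)‖² ≤ 2A²B²((1−ν)B+ν)⁻²·N·((1/N)Σᵢ V(xⁱ))^{2α} + 2ν⁻²·N·d·B²`. -/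
theorem statement_11 {d N : ℕ}
    (k : EuclideanSpace ℝ (Fin d) → EuclideanSpace ℝ (Fin d) → ℝ)
    (V : EuclideanSpace ℝ (Fin d) → ℝ) (B A α ν : ℝ)
    (hB : 0 < B)
    (hksymm : ∀ x y, k x y = k y x)
    (hgram : ∀ (m : ℕ) (y : Fin m → EuclideanSpace ℝ (Fin d)),
      (Matrix.of fun a b : Fin m => k (y a) (y b)).PosSemidef)
    (hkC2 : ContDiff ℝ 2 (fun p : EuclideanSpace ℝ (Fin d) × EuclideanSpace ℝ (Fin d) =>
      k p.1 p.2))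
    (hk0 : ∀ x y, |k x y| ≤ B)
    (hk1 : ∀ (p : EuclideanSpace ℝ (Fin d) × EuclideanSpace ℝ (Fin d)) (v : Fin d ⊕ Fin d),
      |fderiv ℝ (fun q : EuclideanSpace ℝ (Fin d) × EuclideanSpace ℝ (Fin d) => k q.1 q.2) p
        (pairBasis d v)| ≤ B)
    (hk2 : ∀ (p : EuclideanSpace ℝ (Fin d) × EuclideanSpace ℝ (Fin d)) (v w : Fin d ⊕ Fin d),
      |fderiv ℝ (fun q : EuclideanSpace ℝ (Fin d) × EuclideanSpace ℝ (Fin d) =>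
          fderiv ℝ (fun r : EuclideanSpace ℝ (Fin d) × EuclideanSpace ℝ (Fin d) => k r.1 r.2) q
            (pairBasis d v)) p (pairBasis d w)| ≤ B)
    (hVdiff : Differentiable ℝ V)
    (hVpos : ∀ x, 0 < V x)
    (hA : 0 < A) (hα : α ∈ Set.Icc (0 : ℝ) (1 / 2))
    (hVgrad : ∀ x, ‖gradient V x‖ ≤ A * V x ^ α)
    (hν : ν ∈ Set.Ioc (0 : ℝ) 1)
    (x : Fin N → EuclideanSpace ℝ (Fin d)) :
    ∑ i : Fin N, ‖steinField d N k V ν x i‖ ^ 2 ≤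
      2 * A ^ 2 * B ^ 2 / ((1 - ν) * B + ν) ^ 2 * N *
          (((N : ℝ)⁻¹ * ∑ i : Fin N, V (x i)) ^ (2 * α)) +
        2 * (N : ℝ) * d * B ^ 2 / ν ^ 2 := by
  classical
  rcases Nat.eq_zero_or_pos N with hN | hN
  · subst hN; simp
  have hN' : (0 : ℝ) < N := by exact_mod_cast hN
  obtain ⟨hν0, hν1⟩ := hν
  obtain ⟨hα0, hα1⟩ := hα
  have hD : 0 < (1 - ν) * B + ν := by
    have : 0 ≤ 1 - ν := by linarith
    positivity
  set K : Matrix (Fin N) (Fin N) ℝ := Matrix.of (fun a b : Fin N => k (x a) (x b)) with hK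
  set P : Matrix (Fin N) (Fin N) ℝ := (N : ℝ)⁻¹ • K with hP
  set M : Matrix (Fin N) (Fin N) ℝ :=
    ((1 - ν) / (N : ℝ)) • K + ν • (1 : Matrix (Fin N) (Fin N) ℝ) with hM
  have hMP : M = (1 - ν) • P + ν • (1 : Matrix (Fin N) (Fin N) ℝ) := by
    rw [hM, hP, smul_smul, div_eq_mul_inv]
  have hsymm : P.transpose = P := by
    ext a b
    simp [hP, hK, hksymm (x b) (x a)]
  have hpos : ∀ y : Fin N → ℝ, 0 ≤ y ⬝ᵥ (P.mulVec y) := by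
    intro y
    have h := (hgram N x).dotProduct_mulVec_nonneg y
    rw [hP, Matrix.smul_mulVec, dotProduct_smul, smul_eq_mul]
    have h' : 0 ≤ y ⬝ᵥ (K.mulVec y) := by simpa using h
    positivity
  have hle : ∀ y : Fin N → ℝ, y ⬝ᵥ (P.mulVec y) ≤ B * (y ⬝ᵥ y) :=
    aux_quad hN K B (fun a b => hk0 _ _) hB
  let u : Fin d → Fin N → ℝ := fun c j => gradient V (x j) c
  let g : Fin d → Fin N → ℝ := fun c l => (N : ℝ)⁻¹ * ∑ j, gradient (k (x l)) (x j) c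
  have hT : ∀ c i, steinField d N k V ν x i c = M⁻¹.mulVec (P.mulVec (u c) - g c) i := by
    intro c i
    simp only [steinField, Matrix.mulVec, dotProduct, u, g, hP, Pi.sub_apply, hK,
      Matrix.smul_apply, Matrix.of_apply, smul_eq_mul, WithLp.ofLp_sum, WithLp.ofLp_smul,
      WithLp.ofLp_sub, Finset.sum_apply, Pi.smul_apply, ← hM]
    refine Finset.sum_congr rfl fun l _ => ?_
    rw [Finset.sum_sub_distrib, mul_sub, Finset.mul_sum]
    simp only [mul_assoc]
    rfl
  have hL : ∑ i : Fin N, ‖steinField d N k V ν x i‖ ^ 2 =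
      ∑ c, (M⁻¹.mulVec (P.mulVec (u c) - g c)) ⬝ᵥ (M⁻¹.mulVec (P.mulVec (u c) - g c)) := by
    simp only [EuclideanSpace.real_norm_sq_eq, hT]
    rw [Finset.sum_comm]
    simp only [dotProduct, sq]
  have hg : ∀ c, g c ⬝ᵥ g c ≤ N * B ^ 2 := by
    intro c
    have h1 : ∀ l, |g c l| ≤ B := by
      intro l
      simp only [g, abs_mul, abs_inv, Nat.abs_cast]
      rw [inv_mul_le_iff₀ hN']
      refine (Finset.abs_sum_le_sum_abs _ _).trans ?_
      refine (Finset.sum_le_card_nsmul _ _ B fun j _ => ?_).trans (by simp)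
      rw [aux_grad k hkC2]
      exact hk1 _ _
    refine (Finset.sum_le_card_nsmul _ _ (B ^ 2) fun l _ => ?_).trans (by simp)
    rw [← sq, ← sq_abs]
    exact pow_le_pow_left₀ (abs_nonneg _) (h1 l) 2
  have hu : ∑ c, u c ⬝ᵥ u c ≤
      A ^ 2 * (N * ((N : ℝ)⁻¹ * ∑ i : Fin N, V (x i)) ^ (2 * α)) := by
    have h1 : ∑ c, u c ⬝ᵥ u c = ∑ j, ‖gradient V (x j)‖ ^ 2 := by
      simp only [EuclideanSpace.real_norm_sq_eq]
      rw [Finset.sum_comm]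
      simp only [dotProduct, sq, u]
    rw [h1]
    refine le_trans ?_ (mul_le_mul_of_nonneg_left
      (aux_jensen hN (fun i => V (x i)) (fun i => hVpos _) (2 * α) (by linarith) (by linarith))
      (sq_nonneg A))
    rw [Finset.mul_sum]
    refine Finset.sum_le_sum fun j _ => ?_
    refine (pow_le_pow_left₀ (norm_nonneg _) (hVgrad (x j)) 2).trans (le_of_eq ?_)
    rw [mul_pow, mul_comm 2 α, Real.rpow_mul (hVpos _).le]
    norm_num
  rw [hL]
  refine (Finset.sum_le_sum fun c _ =>
    aux_main P B ν hB hsymm hpos hle hν0 hν1 M hMP (u c) (g c)).trans ?_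
  rw [Finset.sum_add_distrib, ← Finset.mul_sum, ← Finset.mul_sum, ← Finset.mul_sum,
    ← Finset.sum_div]
  have hg' : ∑ c, g c ⬝ᵥ g c ≤ d * (N * B ^ 2) :=
    (Finset.sum_le_card_nsmul _ _ _ fun c _ => hg c).trans (by simp)
  have q1 := mul_le_mul_of_nonneg_left hu
    (show 0 ≤ B ^ 2 / ((1 - ν) * B + ν) ^ 2 by positivity)
  have q2 := div_le_div_of_nonneg_right hg' (sq_nonneg ν)
  refine (add_le_add (mul_le_mul_of_nonneg_left q1 zero_le_two)
    (mul_le_mul_of_nonneg_left q2 zero_le_two)).trans (le_of_eq ?_)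
  ring

end
end

section
/- Assume k : ℝ^d × ℝ^d → ℝ is a symmetric kernel of class C² such that every Gram matrix (k(xⁱ,xʲ))_{i,j=1}^N is positive semidefinite and k together with all its partial derivatives up to order 2 is bounded in absolute value by B, with B ≥ 1. Assume V : ℝ^d → ℝ is twice continuously differentiable with ‖∇²V(x)‖_op ≤ C_V for all x, V(x) > 0 for all x, and ‖∇V(x)‖ ≤ A·V(x)^α for all x, where A > 0 and α ∈ [0,1/2]. Let ν ∈ (0,1]. Then the R-SVGD vector field 𝖳_ν : ℝ^{dN} → ℝ^{dN} is differentiable at every configuration x̲ = (x¹,…,x^N), and the Frobenius (Hilbert–Schmidt) norm of its Jacobian satisfies ‖D𝖳_ν(x̲)‖²_HS ≤ 27·ν⁻⁴·A²·B⁴·N·d·((1/N)Σ_{j=1}^N V(xʲ))^{2α} + 27·ν⁻⁴·B⁴·N·d² + 9·ν⁻²·B²·C_V²·d. -/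
noncomputable section

theorem coercive_aux {N d : ℕ} (K : Matrix (Fin N) (Fin N) ℝ) (hK : K.PosSemidef) (c ν : ℝ)
    (hc : 0 ≤ c) (hν : 0 < ν) (t r : Fin N → EuclideanSpace ℝ (Fin d))
    (h : ∀ l, ∑ m, (c • K + ν • (1 : Matrix (Fin N) (Fin N) ℝ)) l m • t m = r l) :
    ν ^ 2 * ∑ m, ‖t m‖ ^ 2 ≤ ∑ m, ‖r m‖ ^ 2 := by
  simp only [EuclideanSpace.norm_sq_eq]
  rw [Finset.sum_comm, Finset.sum_comm (s := Finset.univ) (t := Finset.univ)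
    (f := fun m a => ‖(r m) a‖ ^ 2), Finset.mul_sum]
  apply Finset.sum_le_sum
  intro a _
  simp only [Real.norm_eq_abs, sq_abs]
  have hr : ∀ l, r l a = c * (∑ m, K l m * t m a) + ν * t l a := by
    intro l
    rw [← h l]
    simp [Matrix.one_apply, add_mul, Finset.sum_add_distrib, Finset.mul_sum, mul_assoc]
  have h1 := hK.dotProduct_mulVec_nonneg (fun m => t m a)
  have h2 : 0 ≤ ∑ l, t l a * ∑ m, K l m * t m a := by
    simpa [dotProduct, Matrix.mulVec] using h1
  have h3 : ∑ l, (r l a) ^ 2 - ν ^ 2 * ∑ l, (t l a) ^ 2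
      = ∑ l, (c * (∑ m, K l m * t m a)) ^ 2 + 2 * c * ν * ∑ l, t l a * ∑ m, K l m * t m a := by
    rw [Finset.mul_sum, Finset.mul_sum, ← Finset.sum_sub_distrib, ← Finset.sum_add_distrib]
    apply Finset.sum_congr rfl
    intro l _
    rw [hr l]; ring
  have h4 : 0 ≤ ∑ l, (c * (∑ m, K l m * t m a)) ^ 2 := Finset.sum_nonneg fun _ _ => sq_nonneg _
  have h5 : 0 ≤ 2 * c * ν * ∑ l, t l a * ∑ m, K l m * t m a := by positivity
  linarith

theorem det_diff {E : Type*} [NormedAddCommGroup E] [NormedSpace ℝ E] {N : ℕ}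
    (M : E → Matrix (Fin N) (Fin N) ℝ) (x : E)
    (hM : ∀ i j, DifferentiableAt ℝ (fun y => M y i j) x) :
    DifferentiableAt ℝ (fun y => (M y).det) x := by
  simp only [Matrix.det_apply, Units.smul_def, zsmul_eq_mul]
  fun_prop

theorem inv_diff {E : Type*} [NormedAddCommGroup E] [NormedSpace ℝ E] {N : ℕ}
    (M : E → Matrix (Fin N) (Fin N) ℝ) (x : E)
    (hM : ∀ i j, DifferentiableAt ℝ (fun y => M y i j) x) (h0 : (M x).det ≠ 0) (i j : Fin N) :
    DifferentiableAt ℝ (fun y => (M y)⁻¹ i j) x := by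
  have : (fun y => (M y)⁻¹ i j) = fun y => ((M y).det)⁻¹ * ((M y).updateRow j (Pi.single i 1)).det := by
    ext y
    simp [Matrix.inv_def, Matrix.adjugate_apply]
  rw [this]
  refine ((det_diff M x hM).inv h0).mul (det_diff _ x ?_)
  intro a b
  by_cases h : a = j
  · subst h; simp
  · simp [Matrix.updateRow_ne h, hM]

theorem M_posDef {N : ℕ} (K : Matrix (Fin N) (Fin N) ℝ) (hK : K.PosSemidef) (c ν : ℝ)
    (hc : 0 ≤ c) (hν : 0 < ν) : (c • K + ν • (1 : Matrix (Fin N) (Fin N) ℝ)).PosDef := 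
  Matrix.PosDef.posSemidef_add (hK.smul hc) (Matrix.PosDef.one.smul hν)

theorem jensen_aux {N : ℕ} (hN : 0 < N) (v : Fin N → ℝ) (hv : ∀ j, 0 ≤ v j) (p : ℝ)
    (h0 : 0 ≤ p) (h1 : p ≤ 1) :
    ∑ j, v j ^ p ≤ N * ((N : ℝ)⁻¹ * ∑ j, v j) ^ p := by
  have hN' : (0:ℝ) < N := by exact_mod_cast hN
  have := (Real.concaveOn_rpow h0 h1).le_map_sum (t := Finset.univ) (w := fun _ : Fin N => (N:ℝ)⁻¹)
    (p := v) (by intros; positivity) (by simp [hN'.ne']) (by intro i _; exact hv i)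
  simp only [smul_eq_mul, ← Finset.mul_sum] at this
  rwa [inv_mul_le_iff₀ hN'] at this

theorem row_col_bound {N d : ℕ} (B : ℝ) (i : Fin N) (h : Fin N → ℝ)
    (w : Fin N → Fin N → EuclideanSpace ℝ (Fin d))
    (hw : ∀ l j, ‖w l j‖ ≤ B * ((if l = i then 1 else 0) + (if j = i then 1 else 0)) * h j) :
    ∑ l, ‖∑ j, w l j‖ ^ 2 ≤ 2 * B ^ 2 * N * (∑ j, h j ^ 2 + h i ^ 2) := by
  have h1 : ∀ l, ‖∑ j, w l j‖ ^ 2 ≤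
      2 * B ^ 2 * ((if l = i then N * ∑ j, h j ^ 2 else 0) + h i ^ 2) := by
    intro l
    have h2 : ‖∑ j, w l j‖ ≤ B * ((if l = i then 1 else 0) * ∑ j, h j + h i) := by
      calc ‖∑ j, w l j‖ ≤ ∑ j, ‖w l j‖ := norm_sum_le _ _
        _ ≤ ∑ j, B * ((if l = i then 1 else 0) + (if j = i then 1 else 0)) * h j :=
            Finset.sum_le_sum fun j _ => hw l j
        _ = B * ((if l = i then 1 else 0) * ∑ j, h j + h i) := by
            simp only [mul_add, add_mul, Finset.sum_add_distrib, mul_assoc, ← Finset.mul_sum]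
            simp
    have h3 : ‖∑ j, w l j‖ ^ 2 ≤ (B * ((if l = i then 1 else 0) * ∑ j, h j + h i)) ^ 2 :=
      pow_le_pow_left₀ (norm_nonneg _) h2 2
    refine h3.trans ?_
    rw [mul_pow, mul_comm 2, mul_assoc]
    apply mul_le_mul_of_nonneg_left _ (sq_nonneg B)
    have h4 : (∑ j, h j) ^ 2 ≤ N * ∑ j, h j ^ 2 := by
      simpa using sq_sum_le_card_mul_sum_sq (s := Finset.univ) (f := h)
    split_ifs
    · nlinarith [sq_nonneg (∑ j, h j - h i)]
    · nlinarith [sq_nonneg (h i)]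
  calc ∑ l, ‖∑ j, w l j‖ ^ 2 ≤ _ := Finset.sum_le_sum fun l _ => h1 l
    _ = 2 * B ^ 2 * N * (∑ j, h j ^ 2 + h i ^ 2) := by
      rw [← Finset.mul_sum, Finset.sum_add_distrib]
      simp
      ring

theorem dir_bound {N d : ℕ} (K : Matrix (Fin N) (Fin N) ℝ) (hK : K.PosSemidef) (hN : 0 < N)
    (B ν C : ℝ) (hν : 0 < ν) (hν1 : ν ≤ 1) (i : Fin N)
    (hKB : ∀ l m, |K l m| ≤ B)
    (dK : Fin N → Fin N → ℝ)
    (hdK : ∀ l m, |dK l m| ≤ B * ((if l = i then 1 else 0) + (if m = i then 1 else 0)))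
    (t g dg D : Fin N → EuclideanSpace ℝ (Fin d)) (dq : Fin N → Fin N → EuclideanSpace ℝ (Fin d))
    (hdg : ‖dg i‖ ≤ C) (hdg0 : ∀ j, j ≠ i → dg j = 0)
    (hdq : ∀ l j, ‖dq l j‖ ≤
      B * ((if l = i then 1 else 0) + (if j = i then 1 else 0)) * Real.sqrt d)
    (hD : ∀ l, ∑ m, (((1 - ν) / (N : ℝ)) • K + ν • (1 : Matrix (Fin N) (Fin N) ℝ)) l m • D m =
      (N : ℝ)⁻¹ • ∑ j, ((dK l j • g j + K l j • dg j) - dq l j)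
        - ((1 - ν) / (N : ℝ)) • ∑ m, dK l m • t m) :
    ν ^ 2 * ∑ l, ‖D l‖ ^ 2 ≤
      3 * (2 * B ^ 2 * (N : ℝ)⁻¹ * (∑ j, (‖g j‖ + Real.sqrt d) ^ 2 + (‖g i‖ + Real.sqrt d) ^ 2)
        + (N : ℝ)⁻¹ * (B ^ 2 * C ^ 2)
        + (1 - ν) ^ 2 * (2 * B ^ 2 * (N : ℝ)⁻¹ * (∑ j, ‖t j‖ ^ 2 + ‖t i‖ ^ 2))) := by
  have hN' : (0 : ℝ) < N := by exact_mod_cast hN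
  have hc : 0 ≤ (1 - ν) / (N : ℝ) := div_nonneg (by linarith) hN'.le
  refine (coercive_aux K hK _ ν hc hν D _ hD).trans ?_
  have hδ : ∀ l j : Fin N, (0:ℝ) ≤ (if l = i then 1 else 0) + (if j = i then 1 else 0) := by
    intro l j; positivity
  have hY := row_col_bound B i (fun j => ‖g j‖ + Real.sqrt d)
    (fun l j => dK l j • g j - dq l j) (by
      intro l j
      refine (norm_sub_le _ _).trans ?_
      rw [norm_smul, Real.norm_eq_abs, mul_add]
      exact add_le_add (mul_le_mul_of_nonneg_right (hdK l j) (norm_nonneg _)) (hdq l j))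
  have hX := row_col_bound B i (fun j => ‖t j‖)
    (fun l j => dK l j • t j) (by
      intro l j
      rw [norm_smul, Real.norm_eq_abs]
      exact mul_le_mul_of_nonneg_right (hdK l j) (norm_nonneg _))
  have hR : ∑ l, ‖∑ j, K l j • dg j‖ ^ 2 ≤ N * (B ^ 2 * C ^ 2) := by
    have : ∀ l, ‖∑ j, K l j • dg j‖ ^ 2 ≤ B ^ 2 * C ^ 2 := by
      intro l
      rw [Finset.sum_eq_single i (by intro j _ hj; simp [hdg0 j hj]) (by simp), norm_smul,
        mul_pow, Real.norm_eq_abs]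
      gcongr
      exact hKB l i
    calc _ ≤ ∑ l : Fin N, B ^ 2 * C ^ 2 := Finset.sum_le_sum fun l _ => this l
      _ = _ := by simp
  have h3 : ∀ l, ‖(N : ℝ)⁻¹ • ∑ j, ((dK l j • g j + K l j • dg j) - dq l j)
        - ((1 - ν) / (N : ℝ)) • ∑ m, dK l m • t m‖ ^ 2 ≤
      3 * (N : ℝ)⁻¹ ^ 2 * (‖∑ j, (dK l j • g j - dq l j)‖ ^ 2 + ‖∑ j, K l j • dg j‖ ^ 2
        + (1 - ν) ^ 2 * ‖∑ j, dK l j • t j‖ ^ 2) := by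
    intro l
    have e : (N : ℝ)⁻¹ • ∑ j, ((dK l j • g j + K l j • dg j) - dq l j)
        - ((1 - ν) / (N : ℝ)) • ∑ m, dK l m • t m =
        (N : ℝ)⁻¹ • ((∑ j, (dK l j • g j - dq l j)) + (∑ j, K l j • dg j)
          - (1 - ν) • ∑ j, dK l j • t j) := by
      simp only [Finset.sum_sub_distrib, Finset.sum_add_distrib, smul_sub, smul_add, smul_smul,
        div_eq_inv_mul]
      abel
    rw [e, norm_smul, mul_pow, Real.norm_eq_abs, sq_abs, mul_comm 3, mul_assoc]
    apply mul_le_mul_of_nonneg_left _ (by positivity)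
    have n1 : ‖(∑ j, (dK l j • g j - dq l j)) + (∑ j, K l j • dg j)
          - (1 - ν) • ∑ j, dK l j • t j‖ ≤ ‖∑ j, (dK l j • g j - dq l j)‖ + ‖∑ j, K l j • dg j‖
          + (1 - ν) * ‖∑ j, dK l j • t j‖ := by
      refine (norm_sub_le _ _).trans (add_le_add (norm_add_le _ _) ?_)
      rw [norm_smul, Real.norm_eq_abs, abs_of_nonneg (by linarith)]
    refine (pow_le_pow_left₀ (norm_nonneg _) n1 2).trans ?_
    generalize ‖∑ j, (dK l j • g j - dq l j)‖ = a
    generalize ‖∑ j, K l j • dg j‖ = b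
    rw [← mul_pow]
    generalize (1 - ν) * ‖∑ j, dK l j • t j‖ = c
    nlinarith [sq_nonneg (a - b), sq_nonneg (a - c), sq_nonneg (b - c)]
  refine (Finset.sum_le_sum fun l _ => h3 l).trans ?_
  rw [← Finset.mul_sum, Finset.sum_add_distrib, Finset.sum_add_distrib, ← Finset.mul_sum]
  have hX' := mul_le_mul_of_nonneg_left hX (sq_nonneg (1 - ν))
  have := mul_le_mul_of_nonneg_left (add_le_add (add_le_add hY hR) hX')
    (show 0 ≤ 3 * (N : ℝ)⁻¹ ^ 2 by positivity)
  refine this.trans (le_of_eq ?_)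
  field_simp

theorem total_bound {N d : ℕ} (hN : 0 < N) (B ν C W A : ℝ) (hB : 1 ≤ B) (hν : 0 < ν) (hν1 : ν ≤ 1)
    (h τ : Fin N → ℝ) (hh : ∑ j, h j ^ 2 ≤ 2 * N * (A ^ 2 * W + d))
    (hτ : ν ^ 2 * ∑ j, τ j ^ 2 ≤ B ^ 2 * ∑ j, h j ^ 2)
    (S : Fin N → Fin d → ℝ)
    (hS : ∀ i a, ν ^ 2 * S i a ≤ 
      3 * (2 * B ^ 2 * (N : ℝ)⁻¹ * (∑ j, h j ^ 2 + h i ^ 2)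
        + (N : ℝ)⁻¹ * (B ^ 2 * C ^ 2)
        + (1 - ν) ^ 2 * (2 * B ^ 2 * (N : ℝ)⁻¹ * (∑ j, τ j ^ 2 + τ i ^ 2)))) :
    ∑ i, ∑ a, S i a ≤ 27 * ν⁻¹ ^ 4 * A ^ 2 * B ^ 4 * N * d * W + 27 * ν⁻¹ ^ 4 * B ^ 4 * N * d ^ 2 +
          9 * ν⁻¹ ^ 2 * B ^ 2 * C ^ 2 * d := by
  have hN' : (1 : ℝ) ≤ N := by exact_mod_cast hN
  have hH0 : 0 ≤ ∑ j, h j ^ 2 := Finset.sum_nonneg fun _ _ => sq_nonneg _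
  have hT0 : 0 ≤ ∑ j, τ j ^ 2 := Finset.sum_nonneg fun _ _ => sq_nonneg _
  have h1 : ν ^ 2 * ∑ i, ∑ a, S i a ≤ d * (3 * (2 * B ^ 2 * (1 + (N : ℝ)⁻¹) * (∑ j, h j ^ 2)
        + (B ^ 2 * C ^ 2)
        + (1 - ν) ^ 2 * (2 * B ^ 2 * (1 + (N : ℝ)⁻¹) * (∑ j, τ j ^ 2)))) := by
    rw [Finset.mul_sum]
    simp_rw [Finset.mul_sum (s := (Finset.univ : Finset (Fin d)))]
    refine (Finset.sum_le_sum fun i _ => Finset.sum_le_sum fun a _ => hS i a).trans (le_of_eq ?_)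
    simp only [Finset.sum_const, Finset.card_univ, Fintype.card_fin, nsmul_eq_mul]
    rw [← Finset.mul_sum, ← Finset.mul_sum]
    simp only [Finset.sum_add_distrib, ← Finset.mul_sum]
    simp only [Finset.sum_const, Finset.card_univ, Fintype.card_fin, nsmul_eq_mul]
    field_simp
  generalize hH : ∑ j, h j ^ 2 = H at *
  generalize hT : ∑ j, τ j ^ 2 = T at *
  generalize hSS : ∑ i, ∑ a, S i a = Z at *
  have hinv : (N : ℝ)⁻¹ ≤ 1 := inv_le_one_of_one_le₀ hN'
  have hd : (0:ℝ) ≤ d := Nat.cast_nonneg d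
  have h2 : ν ^ 2 * Z ≤ d * (3 * (4 * B ^ 2 * H + B ^ 2 * C ^ 2 + (1 - ν) ^ 2 * (4 * B ^ 2 * T))) := by
    refine h1.trans ?_
    have : (1 + (N : ℝ)⁻¹) ≤ 2 := by linarith
    have e1 : 2 * B ^ 2 * (1 + (N : ℝ)⁻¹) ≤ 4 * B ^ 2 := by nlinarith [sq_nonneg B]
    gcongr
  have hB4 : B ^ 2 ≤ B ^ 4 := pow_le_pow_right₀ hB (by norm_num)
  have hν4 : ν ^ 4 * Z ≤ 12 * d * B ^ 4 * H + 3 * ν ^ 2 * d * (B ^ 2 * C ^ 2) := by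
    have a1 : ν ^ 4 * Z = ν ^ 2 * (ν ^ 2 * Z) := by ring
    have a2 : ν ^ 2 * (ν ^ 2 * Z) ≤ ν ^ 2 * (d * (3 * (4 * B ^ 2 * H + B ^ 2 * C ^ 2 + (1 - ν) ^ 2 * (4 * B ^ 2 * T)))) := by gcongr
    have a3 : (12 * d * (1 - ν) ^ 2 * B ^ 2) * (ν ^ 2 * T) ≤ (12 * d * (1 - ν) ^ 2 * B ^ 2) * (B ^ 2 * H) := by gcongr
    have a4 : (12 * d * H * ν ^ 2) * B ^ 2 ≤ (12 * d * H * ν ^ 2) * B ^ 4 := by gcongr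
    have a5 : (12 * d * B ^ 4 * H) * ((1 - ν) ^ 2 + ν ^ 2) ≤ (12 * d * B ^ 4 * H) * 1 := by
      gcongr
      nlinarith
    nlinarith
  have h5 : 12 * d * B ^ 4 * H ≤ 12 * d * B ^ 4 * (2 * N * (A ^ 2 * W + d)) := by gcongr
  have h6 : 0 ≤ 12 * d * B ^ 4 * (2 * N * (A ^ 2 * W + d)) := le_trans (by positivity) h5
  have h7 : 0 ≤ ν ^ 2 * d * (B ^ 2 * C ^ 2) := by positivity
  have e : 27 * ν⁻¹ ^ 4 * A ^ 2 * B ^ 4 * N * d * W + 27 * ν⁻¹ ^ 4 * B ^ 4 * N * d ^ 2 +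
          9 * ν⁻¹ ^ 2 * B ^ 2 * C ^ 2 * d = (27 / 24 * (12 * d * B ^ 4 * (2 * N * (A ^ 2 * W + d)))
            + 9 * (ν ^ 2 * d * (B ^ 2 * C ^ 2))) / ν ^ 4 := by
    field_simp
    ring
  rw [e, le_div_iff₀ (by positivity)]
  nlinarith

theorem dir_lin_bound {d N : ℕ}
    (L : EuclideanSpace ℝ (Fin d) × EuclideanSpace ℝ (Fin d) →L[ℝ] ℝ) (B : ℝ)
    (hL : ∀ v, |L (pairBasis d v)| ≤ B) (i : Fin N) (a : Fin d) (l m : Fin N) :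
    |L ((Pi.single i (EuclideanSpace.single a (1 : ℝ)) : Fin N → EuclideanSpace ℝ (Fin d)) l,
        (Pi.single i (EuclideanSpace.single a (1 : ℝ)) : Fin N → EuclideanSpace ℝ (Fin d)) m)| ≤
      B * ((if l = i then 1 else 0) + (if m = i then 1 else 0)) := by
  set v : Fin N → EuclideanSpace ℝ (Fin d) := Pi.single i (EuclideanSpace.single a (1 : ℝ))
    with hv
  have e : L (v l, v m) = L (v l, 0) + L (0, v m) := by
    rw [← map_add]; simp
  have h1 : |L (v l, 0)| ≤ B * (if l = i then 1 else 0) := by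
    by_cases h : l = i
    · subst h
      have := hL (Sum.inl a)
      simpa [hv, pairBasis] using this
    · simp [hv, h, ← Prod.zero_eq_mk]
  have h2 : |L (0, v m)| ≤ B * (if m = i then 1 else 0) := by
    by_cases h : m = i
    · subst h
      have := hL (Sum.inr a)
      simpa [hv, pairBasis] using this
    · simp [hv, h, ← Prod.zero_eq_mk]
  rw [e, mul_add]
  exact (abs_add_le _ _).trans (add_le_add h1 h2)

theorem norm_le_of_coord {d : ℕ} (w : EuclideanSpace ℝ (Fin d)) (c : ℝ) (hc : 0 ≤ c)
    (h : ∀ a, |w a| ≤ c) : ‖w‖ ≤ c * Real.sqrt d := by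
  apply le_of_sq_le_sq _ (by positivity)
  rw [EuclideanSpace.norm_sq_eq, mul_pow, Real.sq_sqrt (Nat.cast_nonneg d)]
  calc ∑ a, ‖w a‖ ^ 2 ≤ ∑ a : Fin d, c ^ 2 := by
        apply Finset.sum_le_sum
        intro a _
        exact pow_le_pow_left₀ (norm_nonneg _) (h a) 2
    _ = c ^ 2 * d := by simp [mul_comm]

/-- The gradient in the second variable, as a function on pairs. -/
def gradTwo (d : ℕ) (k : EuclideanSpace ℝ (Fin d) → EuclideanSpace ℝ (Fin d) → ℝ)
    (p : EuclideanSpace ℝ (Fin d) × EuclideanSpace ℝ (Fin d)) : EuclideanSpace ℝ (Fin d) :=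
  WithLp.toLp 2 fun a => fderiv ℝ (fun r : EuclideanSpace ℝ (Fin d) × EuclideanSpace ℝ (Fin d) =>
    k r.1 r.2) p (pairBasis d (Sum.inr a))

theorem gradient_eq_gradTwo {d : ℕ}
    (k : EuclideanSpace ℝ (Fin d) → EuclideanSpace ℝ (Fin d) → ℝ)
    (hk : Differentiable ℝ (fun p : EuclideanSpace ℝ (Fin d) × EuclideanSpace ℝ (Fin d) =>
      k p.1 p.2)) (u w : EuclideanSpace ℝ (Fin d)) :
    gradient (k u) w = gradTwo d k (u, w) := by
  ext a
  have h1 : HasFDerivAt (k u) ((fderiv ℝ (fun r : EuclideanSpace ℝ (Fin d) ×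
      EuclideanSpace ℝ (Fin d) => k r.1 r.2) (u, w)).comp
      (ContinuousLinearMap.inr ℝ _ _)) w :=
    HasFDerivAt.comp (g := fun r : EuclideanSpace ℝ (Fin d) ×
      EuclideanSpace ℝ (Fin d) => k r.1 r.2) w (hk (u, w)).hasFDerivAt (hasFDerivAt_prodMk_right u w)
  have h2 : (gradient (k u) w) a = inner ℝ (EuclideanSpace.single a (1:ℝ)) (gradient (k u) w) := by
    rw [EuclideanSpace.inner_single_left]; simp
  rw [h2, inner_gradient_right, h1.fderiv]
  simp [gradTwo, pairBasis]

theorem gradTwo_differentiable {d : ℕ}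
    (k : EuclideanSpace ℝ (Fin d) → EuclideanSpace ℝ (Fin d) → ℝ)
    (hk : ContDiff ℝ 2 (fun p : EuclideanSpace ℝ (Fin d) × EuclideanSpace ℝ (Fin d) =>
      k p.1 p.2)) : Differentiable ℝ (gradTwo d k) := by
  rw [differentiable_euclidean]
  intro a
  have h : Differentiable ℝ (fderiv ℝ (fun r : EuclideanSpace ℝ (Fin d) ×
      EuclideanSpace ℝ (Fin d) => k r.1 r.2)) :=
    (hk.fderiv_right (m := 1) (by norm_num)).differentiable (by norm_num)
  exact h.clm_apply (differentiable_const _)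

theorem gradTwo_fderiv_apply {d : ℕ}
    (k : EuclideanSpace ℝ (Fin d) → EuclideanSpace ℝ (Fin d) → ℝ)
    (hk : ContDiff ℝ 2 (fun p : EuclideanSpace ℝ (Fin d) × EuclideanSpace ℝ (Fin d) =>
      k p.1 p.2)) (p w) (a : Fin d) :
    fderiv ℝ (gradTwo d k) p w a = fderiv ℝ (fun q => fderiv ℝ (fun r : EuclideanSpace ℝ (Fin d) ×
      EuclideanSpace ℝ (Fin d) => k r.1 r.2) q (pairBasis d (Sum.inr a))) p w := by
  have h := (gradTwo_differentiable k hk p).hasFDerivAt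
  have h1 := HasFDerivAt.comp p (EuclideanSpace.proj a :
    EuclideanSpace ℝ (Fin d) →L[ℝ] ℝ).hasFDerivAt h
  exact (congrArg (fun L => L w) h1.fderiv).symm

theorem gradient_differentiable {d : ℕ} (V : EuclideanSpace ℝ (Fin d) → ℝ)
    (hV : ContDiff ℝ 2 V) : Differentiable ℝ (gradient V) := by
  have h : Differentiable ℝ (fderiv ℝ V) :=
    (hV.fderiv_right (m := 1) (by norm_num)).differentiable (by norm_num)
  exact (InnerProductSpace.toDual ℝ (EuclideanSpace ℝ (Fin d))).symm.toContinuousLinearEquiv.differentiable.comp h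

/-- The unpreconditioned field. -/
def rawField (d N : ℕ) (k : EuclideanSpace ℝ (Fin d) → EuclideanSpace ℝ (Fin d) → ℝ)
    (V : EuclideanSpace ℝ (Fin d) → ℝ)
    (x : Fin N → EuclideanSpace ℝ (Fin d)) (l : Fin N) : EuclideanSpace ℝ (Fin d) :=
  (N : ℝ)⁻¹ • ∑ j : Fin N, (k (x l) (x j) • gradient V (x j) - gradient (k (x l)) (x j))

theorem stein_solve {d N : ℕ} (k : EuclideanSpace ℝ (Fin d) → EuclideanSpace ℝ (Fin d) → ℝ)
    (V : EuclideanSpace ℝ (Fin d) → ℝ) (ν : ℝ) (x : Fin N → EuclideanSpace ℝ (Fin d))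
    (h : (((1 - ν) / (N : ℝ)) • Matrix.of (fun a b : Fin N => k (x a) (x b)) +
        ν • (1 : Matrix (Fin N) (Fin N) ℝ)).det ≠ 0) (l : Fin N) :
    ∑ m, (((1 - ν) / (N : ℝ)) • Matrix.of (fun a b : Fin N => k (x a) (x b)) +
        ν • (1 : Matrix (Fin N) (Fin N) ℝ)) l m • steinField d N k V ν x m
      = rawField d N k V x l := by
  have e : ∀ m, steinField d N k V ν x m = ∑ p,
    ((((1 - ν) / (N : ℝ)) • Matrix.of (fun a b : Fin N => k (x a) (x b)) +
        ν • (1 : Matrix (Fin N) (Fin N) ℝ))⁻¹ m p) • rawField d N k V x p := fun m => rfl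
  simp_rw [e]
  generalize (((1 - ν) / (N : ℝ)) • Matrix.of (fun a b : Fin N => k (x a) (x b)) +
        ν • (1 : Matrix (Fin N) (Fin N) ℝ)) = M at *
  have hM : M * M⁻¹ = 1 := Matrix.mul_nonsing_inv M (isUnit_iff_ne_zero.mpr h)
  simp_rw [Finset.smul_sum, smul_smul]
  rw [Finset.sum_comm]
  simp_rw [← Finset.sum_smul, ← Matrix.mul_apply, hM, Matrix.one_apply]
  simp

theorem raw_hasFDerivAt {d N : ℕ} (k : EuclideanSpace ℝ (Fin d) → EuclideanSpace ℝ (Fin d) → ℝ)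
    (V : EuclideanSpace ℝ (Fin d) → ℝ)
    (hk : ContDiff ℝ 2 (fun p : EuclideanSpace ℝ (Fin d) × EuclideanSpace ℝ (Fin d) =>
      k p.1 p.2)) (hV : ContDiff ℝ 2 V) (x : Fin N → EuclideanSpace ℝ (Fin d)) (l : Fin N) :
    DifferentiableAt ℝ (fun y => rawField d N k V y l) x ∧ 
    ∀ v, fderiv ℝ (fun y => rawField d N k V y l) x v = (N : ℝ)⁻¹ • ∑ j : Fin N,
      ((fderiv ℝ (fun r : EuclideanSpace ℝ (Fin d) × EuclideanSpace ℝ (Fin d) => k r.1 r.2)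
        (x l, x j) (v l, v j) • gradient V (x j) +
        k (x l) (x j) • fderiv ℝ (fun y => gradient V y) (x j) (v j)) -
        fderiv ℝ (gradTwo d k) (x l, x j) (v l, v j)) := by
  have hkd : Differentiable ℝ (fun p : EuclideanSpace ℝ (Fin d) × EuclideanSpace ℝ (Fin d) =>
      k p.1 p.2) := hk.differentiable (by norm_num)
  have hp : ∀ j, HasFDerivAt (fun y : Fin N → EuclideanSpace ℝ (Fin d) => y j)
    (ContinuousLinearMap.proj j : (Fin N → EuclideanSpace ℝ (Fin d)) →L[ℝ] _) x :=
    fun j => (ContinuousLinearMap.proj j : (Fin N → EuclideanSpace ℝ (Fin d)) →L[ℝ] _).hasFDerivAt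
  have hpp := fun j => (hp l).prodMk (hp j)
  have h1 := fun j => HasFDerivAt.comp (f := fun y : Fin N → EuclideanSpace ℝ (Fin d) => (y l, y j))
    x (hkd (x l, x j)).hasFDerivAt (hpp j)
  have h2 := fun j => HasFDerivAt.comp (f := fun y : Fin N → EuclideanSpace ℝ (Fin d) => (y l, y j))
    x (gradTwo_differentiable k hk (x l, x j)).hasFDerivAt (hpp j)
  have h3 := fun j => HasFDerivAt.comp (f := fun y : Fin N → EuclideanSpace ℝ (Fin d) => y j)
    x (gradient_differentiable V hV (x j)).hasFDerivAt (hp j)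
  have h4 := (HasFDerivAt.fun_sum (u := Finset.univ)
    fun j _ => ((h1 j).fun_smul (h3 j)).fun_sub (h2 j)).fun_const_smul (N : ℝ)⁻¹
  have e : (fun y => rawField d N k V y l) = fun y => (N : ℝ)⁻¹ • ∑ j : Fin N, (k (y l) (y j) •
      gradient V (y j) - gradTwo d k (y l, y j)) := by
    ext1 y
    simp only [rawField, gradient_eq_gradTwo k hkd]
  rw [e]
  refine ⟨h4.differentiableAt, fun v => ?_⟩
  refine (congrArg (fun L => L v) h4.fderiv).trans ?_
  simp [add_comm]

/-- The R-SVGD vector field `𝖳_ν : ℝ^{dN} → ℝ^{dN}` is differentiable and the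
Frobenius (Hilbert–Schmidt) norm of its Jacobian satisfies
`‖D𝖳_ν(x̲)‖²_HS ≤ 27ν⁻⁴A²B⁴Nd((1/N)Σⱼ V(xʲ))^{2α} + 27ν⁻⁴B⁴Nd² + 9ν⁻²B²C_V²d`.
The Frobenius norm squared is written as the sum, over the standard orthonormal basis vectors
`Pi.single i (EuclideanSpace.single a 1)` of `(ℝ^d)^N`, of the squared Euclidean norms of their
images under the Fréchet derivative. -/
theorem statement_12 {d N : ℕ}
    (k : EuclideanSpace ℝ (Fin d) → EuclideanSpace ℝ (Fin d) → ℝ)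
    (V : EuclideanSpace ℝ (Fin d) → ℝ) (B A α ν C_V : ℝ)
    (hB : 1 ≤ B)
    (hksymm : ∀ x y, k x y = k y x)
    (hgram : ∀ (m : ℕ) (y : Fin m → EuclideanSpace ℝ (Fin d)),
      (Matrix.of fun a b : Fin m => k (y a) (y b)).PosSemidef)
    (hkC2 : ContDiff ℝ 2 (fun p : EuclideanSpace ℝ (Fin d) × EuclideanSpace ℝ (Fin d) =>
      k p.1 p.2))
    (hk0 : ∀ x y, |k x y| ≤ B)
    (hk1 : ∀ (p : EuclideanSpace ℝ (Fin d) × EuclideanSpace ℝ (Fin d)) (v : Fin d ⊕ Fin d),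
      |fderiv ℝ (fun q : EuclideanSpace ℝ (Fin d) × EuclideanSpace ℝ (Fin d) => k q.1 q.2) p
        (pairBasis d v)| ≤ B)
    (hk2 : ∀ (p : EuclideanSpace ℝ (Fin d) × EuclideanSpace ℝ (Fin d)) (v w : Fin d ⊕ Fin d),
      |fderiv ℝ (fun q : EuclideanSpace ℝ (Fin d) × EuclideanSpace ℝ (Fin d) =>
          fderiv ℝ (fun r : EuclideanSpace ℝ (Fin d) × EuclideanSpace ℝ (Fin d) => k r.1 r.2) q
            (pairBasis d v)) p (pairBasis d w)| ≤ B)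
    (hVC2 : ContDiff ℝ 2 V)
    (hHess : ∀ z, ‖fderiv ℝ (fun y => gradient V y) z‖ ≤ C_V)
    (hVpos : ∀ x, 0 < V x)
    (hA : 0 < A) (hα : α ∈ Set.Icc (0 : ℝ) (1 / 2))
    (hVgrad : ∀ x, ‖gradient V x‖ ≤ A * V x ^ α)
    (hν : ν ∈ Set.Ioc (0 : ℝ) 1) :
    Differentiable ℝ (steinField d N k V ν) ∧
    ∀ x : Fin N → EuclideanSpace ℝ (Fin d),
      (∑ i : Fin N, ∑ a : Fin d, ∑ j : Fin N,
          ‖fderiv ℝ (steinField d N k V ν) x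
              (Pi.single i (EuclideanSpace.single a (1 : ℝ))) j‖ ^ 2) ≤
        27 * ν⁻¹ ^ 4 * A ^ 2 * B ^ 4 * N * d *
            (((N : ℝ)⁻¹ * ∑ j : Fin N, V (x j)) ^ (2 * α)) +
          27 * ν⁻¹ ^ 4 * B ^ 4 * N * d ^ 2 +
          9 * ν⁻¹ ^ 2 * B ^ 2 * C_V ^ 2 * d := by
  have hν0 := hν.1
  have hν1 := hν.2
  have hkd : Differentiable ℝ (fun p : EuclideanSpace ℝ (Fin d) × EuclideanSpace ℝ (Fin d) =>
      k p.1 p.2) := hkC2.differentiable (by norm_num)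
  have hc : 0 ≤ (1 - ν) / (N : ℝ) := div_nonneg (by linarith) (Nat.cast_nonneg N)
  have hdet : ∀ x : Fin N → EuclideanSpace ℝ (Fin d),
      (((1 - ν) / (N : ℝ)) • Matrix.of (fun a b : Fin N => k (x a) (x b)) +
        ν • (1 : Matrix (Fin N) (Fin N) ℝ)).det ≠ 0 := fun x =>
    (M_posDef _ (hgram N x) _ ν hc hν0).det_pos.ne'
  have hKder : ∀ (x : Fin N → EuclideanSpace ℝ (Fin d)) (l m : Fin N),
      HasFDerivAt (fun y : Fin N → EuclideanSpace ℝ (Fin d) => k (y l) (y m))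
        ((fderiv ℝ (fun r : EuclideanSpace ℝ (Fin d) × EuclideanSpace ℝ (Fin d) => k r.1 r.2)
          (x l, x m)).comp ((ContinuousLinearMap.proj l :
            (Fin N → EuclideanSpace ℝ (Fin d)) →L[ℝ] _).prod (ContinuousLinearMap.proj m))) x := by
    intro x l m
    exact HasFDerivAt.comp (f := fun y : Fin N → EuclideanSpace ℝ (Fin d) => (y l, y m))
      x (hkd (x l, x m)).hasFDerivAt
      ((ContinuousLinearMap.proj l : (Fin N → EuclideanSpace ℝ (Fin d)) →L[ℝ] _).prod
        (ContinuousLinearMap.proj m)).hasFDerivAt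
  have hMder : ∀ (x : Fin N → EuclideanSpace ℝ (Fin d)) (l m : Fin N),
      HasFDerivAt (fun y : Fin N → EuclideanSpace ℝ (Fin d) =>
        (((1 - ν) / (N : ℝ)) • Matrix.of (fun a b : Fin N => k (y a) (y b)) +
          ν • (1 : Matrix (Fin N) (Fin N) ℝ)) l m)
        (((1 - ν) / (N : ℝ)) • ((fderiv ℝ (fun r : EuclideanSpace ℝ (Fin d) ×
          EuclideanSpace ℝ (Fin d) => k r.1 r.2)
          (x l, x m)).comp ((ContinuousLinearMap.proj l :
            (Fin N → EuclideanSpace ℝ (Fin d)) →L[ℝ] _).prod (ContinuousLinearMap.proj m)))) x :=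
    fun x l m => ((hKder x l m).const_smul ((1 - ν) / (N : ℝ))).add_const _
  have hdiff : Differentiable ℝ (steinField d N k V ν) := by
    intro x
    rw [differentiableAt_pi]
    intro i
    refine DifferentiableAt.fun_sum fun l _ => DifferentiableAt.fun_smul
      (inv_diff _ x (fun a b => (hMder x a b).differentiableAt) (hdet x) i l)
      (raw_hasFDerivAt k V hkC2 hVC2 x l).1
  refine ⟨hdiff, fun x => ?_⟩
  rcases Nat.eq_zero_or_pos N with hN | hN
  · subst hN
    simp
    positivity
  have hN' : (0 : ℝ) < N := by exact_mod_cast hN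
  have hB0 : 0 ≤ B := by linarith
  refine total_bound hN B ν C_V _ A hB hν0 hν1 (fun j => ‖gradient V (x j)‖ + Real.sqrt d)
    (fun j => ‖steinField d N k V ν x j‖) ?_ ?_ _ ?_
  · have hj := jensen_aux hN (fun j => V (x j)) (fun j => (hVpos _).le) (2 * α)
      (by linarith [hα.1]) (by linarith [hα.2])
    have h1 : ∀ j, (‖gradient V (x j)‖ + Real.sqrt d) ^ 2 ≤
        2 * (A ^ 2 * V (x j) ^ (2 * α)) + 2 * d := by
      intro j
      have a1 : ‖gradient V (x j)‖ ^ 2 ≤ A ^ 2 * V (x j) ^ (2 * α) := by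
        refine (pow_le_pow_left₀ (norm_nonneg _) (hVgrad (x j)) 2).trans (le_of_eq ?_)
        rw [mul_pow, mul_comm 2 α, Real.rpow_mul (hVpos _).le, Real.rpow_two]
      have a2 : Real.sqrt d ^ 2 = d := Real.sq_sqrt (Nat.cast_nonneg d)
      nlinarith [sq_nonneg (‖gradient V (x j)‖ - Real.sqrt d)]
    refine (Finset.sum_le_sum fun j _ => h1 j).trans ?_
    rw [Finset.sum_add_distrib, ← Finset.mul_sum, ← Finset.mul_sum]
    simp only [Finset.sum_const, Finset.card_univ, Fintype.card_fin, nsmul_eq_mul]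
    have := mul_le_mul_of_nonneg_left hj (sq_nonneg A)
    nlinarith
  · refine (coercive_aux _ (hgram N x) _ ν hc hν0 _ _
      (fun l => stein_solve k V ν x (hdet x) l)).trans ?_
    have h1 : ∀ l, ‖rawField d N k V x l‖ ^ 2 ≤ (N : ℝ)⁻¹ *
        (B ^ 2 * ∑ j, (‖gradient V (x j)‖ + Real.sqrt d) ^ 2) := by
      intro l
      have a1 : ‖rawField d N k V x l‖ ≤ (N : ℝ)⁻¹ *
          (B * ∑ j, (‖gradient V (x j)‖ + Real.sqrt d)) := by
        rw [rawField, norm_smul, Real.norm_eq_abs, abs_of_nonneg (by positivity)]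
        apply mul_le_mul_of_nonneg_left _ (by positivity)
        rw [Finset.mul_sum]
        refine (norm_sum_le _ _).trans (Finset.sum_le_sum fun j _ => ?_)
        refine (norm_sub_le _ _).trans ?_
        rw [norm_smul, mul_add]
        refine add_le_add (mul_le_mul_of_nonneg_right (hk0 _ _) (norm_nonneg _)) ?_
        rw [gradient_eq_gradTwo k hkd]
        exact norm_le_of_coord _ B hB0 fun a => hk1 _ _
      refine (pow_le_pow_left₀ (norm_nonneg _) a1 2).trans ?_
      have a2 : (∑ j, (‖gradient V (x j)‖ + Real.sqrt d)) ^ 2 ≤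
          N * ∑ j, (‖gradient V (x j)‖ + Real.sqrt d) ^ 2 := by
        simpa using sq_sum_le_card_mul_sum_sq (s := Finset.univ)
          (f := fun j => ‖gradient V (x j)‖ + Real.sqrt d)
      calc _ = (N : ℝ)⁻¹ ^ 2 * B ^ 2 * (∑ j, (‖gradient V (x j)‖ + Real.sqrt d)) ^ 2 := by ring
        _ ≤ (N : ℝ)⁻¹ ^ 2 * B ^ 2 * (N * ∑ j, (‖gradient V (x j)‖ + Real.sqrt d) ^ 2) := by gcongr
        _ = _ := by field_simp
    refine (Finset.sum_le_sum fun l _ => h1 l).trans (le_of_eq ?_)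
    simp only [Finset.sum_const, Finset.card_univ, Fintype.card_fin, nsmul_eq_mul]
    field_simp
  · intro i a
    set v : Fin N → EuclideanSpace ℝ (Fin d) := Pi.single i (EuclideanSpace.single a (1 : ℝ))
      with hv
    refine dir_bound (Matrix.of (fun a b : Fin N => k (x a) (x b))) (hgram N x) hN B ν C_V
      hν0 hν1 i (fun l m => hk0 _ _)
      (fun l m => fderiv ℝ (fun r : EuclideanSpace ℝ (Fin d) × EuclideanSpace ℝ (Fin d) =>
        k r.1 r.2) (x l, x m) (v l, v m))
      (fun l m => dir_lin_bound _ B (hk1 _) i a l m)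
      (steinField d N k V ν x) (fun j => gradient V (x j))
      (fun j => fderiv ℝ (fun y => gradient V y) (x j) (v j)) _
      (fun l j => fderiv ℝ (gradTwo d k) (x l, x j) (v l, v j)) ?_ ?_ ?_ ?_
    · refine (ContinuousLinearMap.le_opNorm _ _).trans ?_
      have : ‖v i‖ = 1 := by simp [hv]
      rw [this, mul_one]
      exact hHess _
    · intro j hj
      simp [hv, hj]
    · intro l j
      apply norm_le_of_coord
      · positivity
      · intro b
        rw [gradTwo_fderiv_apply k hkC2]
        exact dir_lin_bound _ B (fun w => hk2 _ _ w) i a l j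
    · intro l
      have hT : ∀ m, HasFDerivAt (fun y => steinField d N k V ν y m)
          ((ContinuousLinearMap.proj m).comp (fderiv ℝ (steinField d N k V ν) x)) x :=
        fun m => hasFDerivAt_pi'.mp (hdiff x).hasFDerivAt m
      have h1 := HasFDerivAt.fun_sum (u := Finset.univ)
        fun m _ => (hMder x l m).fun_smul (hT m)
      have e : (fun y => ∑ m, (((1 - ν) / (N : ℝ)) • Matrix.of (fun a b : Fin N => k (y a) (y b)) +
          ν • (1 : Matrix (Fin N) (Fin N) ℝ)) l m • steinField d N k V ν y m) =
          fun y => rawField d N k V y l := funext fun y => stein_solve k V ν y (hdet y) l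
      rw [e] at h1
      have h2 := congrArg (fun L => L v) h1.fderiv
      simp only at h2
      rw [(raw_hasFDerivAt k V hkC2 hVC2 x l).2 v] at h2
      rw [eq_sub_iff_add_eq]
      refine Eq.trans ?_ h2.symm
      rw [Finset.smul_sum, ← Finset.sum_add_distrib]
      simp [smul_smul]

end
end

section
/- Let α ∈ [0,1/2], A > 0, C_V > 0, and d ≥ 1 be real numbers. Let (fₙ)_{n≥0} be a sequence of nonnegative reals and (ηₙ)_{n≥1} a sequence in (0,1] such that η_{n+1} ≤ 1/(16(1−α)²·C_V·A²·Σ_{l=1}^n η_l) for all n ≥ 1, and f_{n+1} ≤ (1 + C_V·A²·η_{n+1}²)·fₙ + A·√d·η_{n+1}·fₙ^α + C_V·(A² + d)·η_{n+1}² for all n ≥ 0. Then there exists a constant M > 0, depending only on A, C_V and α, such that for all n ≥ 1: fₙ ≤ M·(d^{1/(1−α)} + f₀)·max{ (Σ_{l=1}^n η_l)^{1/(1−α)}, 1 }. -/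
set_option maxHeartbeats 2000000 in
/-- Real-sequence recursion: if `η_{n+1} ≤ 1/(16(1−α)²·C_V·A²·Σ_{l=1}^n η_l)`
and `f_{n+1} ≤ (1 + C_V A² η_{n+1}²) fₙ + A √d η_{n+1} fₙ^α + C_V (A² + d) η_{n+1}²`, then there
is a constant `M > 0` depending only on `A`, `C_V` and `α` such that for all `n ≥ 1`,
`fₙ ≤ M (d^{1/(1−α)} + f₀) max{(Σ_{l=1}^n η_l)^{1/(1−α)}, 1}`. -/
theorem statement_15 (A C_V α : ℝ) (hA : 0 < A) (hCV : 0 < C_V)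
    (hα : α ∈ Set.Icc (0 : ℝ) (1 / 2)) :
    ∃ M : ℝ, 0 < M ∧
      ∀ (d : ℝ), 1 ≤ d →
      ∀ (f η : ℕ → ℝ),
        (∀ n, 0 ≤ f n) →
        (∀ n, 1 ≤ n → η n ∈ Set.Ioc (0 : ℝ) 1) →
        (∀ n : ℕ, 1 ≤ n →
          η (n + 1) ≤ 1 / (16 * (1 - α) ^ 2 * C_V * A ^ 2 * ∑ l ∈ Finset.Icc 1 n, η l)) →
        (∀ n : ℕ,
          f (n + 1) ≤ (1 + C_V * A ^ 2 * η (n + 1) ^ 2) * f n +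
            A * Real.sqrt d * η (n + 1) * f n ^ α + C_V * (A ^ 2 + d) * η (n + 1) ^ 2) →
        ∀ n : ℕ, 1 ≤ n →
          f n ≤ M * (d ^ ((1 : ℝ) / (1 - α)) + f 0) *
            max ((∑ l ∈ Finset.Icc 1 n, η l) ^ ((1 : ℝ) / (1 - α))) 1 := by
  obtain ⟨hα0, hα1⟩ := hα
  have hb : 0 < 1 - α := by linarith
  obtain ⟨p, hp⟩ : ∃ p : ℝ, p = 1 / (1 - α) := ⟨_, rfl⟩
  have hp1 : 1 ≤ p := by rw [hp, le_div_iff₀ hb]; linarith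
  have hpb : p * (1 - α) = 1 := by rw [hp]; field_simp
  rw [← hp]
  obtain ⟨c, hc⟩ : ∃ c : ℝ, c = C_V * A ^ 2 := ⟨_, rfl⟩
  have hc0 : 0 < c := by rw [hc]; positivity
  obtain ⟨θ, hθ⟩ : ∃ θ : ℝ, θ = 1 / (2 * c) := ⟨_, rfl⟩
  have hθ0 : 0 < θ := by rw [hθ]; positivity
  have hcθ : c * θ = 1 / 2 := by rw [hθ]; field_simp
  obtain ⟨K, hK⟩ : ∃ K : ℝ, K = (θ ^ p)⁻¹ + 8 * (C_V * (A ^ 2 + 1)) / θ ^ (p - 1) + (8 * A) ^ p :=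
    ⟨_, rfl⟩
  have hθp : 0 < θ ^ p := Real.rpow_pos_of_pos hθ0 _
  have hθp1 : 0 < θ ^ (p - 1) := Real.rpow_pos_of_pos hθ0 _
  have hAp : 0 < (8 * A) ^ p := Real.rpow_pos_of_pos (by positivity) _
  have t1 : 0 < (θ ^ p)⁻¹ := by positivity
  have t2 : 0 < 8 * (C_V * (A ^ 2 + 1)) / θ ^ (p - 1) := by positivity
  have hK0 : 0 < K := by rw [hK]; positivity
  have hK1 : 1 ≤ K * θ ^ p := by
    rw [← div_le_iff₀ hθp, one_div]; linarith
  have hK2 : 8 * (C_V * (A ^ 2 + 1)) ≤ K * θ ^ (p - 1) := by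
    rw [← div_le_iff₀ hθp1]; linarith
  have hK3 : 8 * A ≤ K ^ (1 - α) := by
    have : ((8 * A) ^ p) ^ (1 - α) ≤ K ^ (1 - α) :=
      Real.rpow_le_rpow hAp.le (by linarith) hb.le
    rwa [← Real.rpow_mul (by positivity), hpb, Real.rpow_one] at this
  refine ⟨K * (θ + 1) ^ p, by positivity, ?_⟩
  intro d hd f η hf hη hs hrec n hn
  obtain ⟨D, hD⟩ : ∃ D : ℝ, D = d ^ p + f 0 := ⟨_, rfl⟩
  rw [← hD]
  have hdD : d ^ p ≤ D := by have := hf 0; linarith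
  have hd0 : 0 < d := by linarith
  have hddp : d ≤ d ^ p := by
    simpa using Real.rpow_le_rpow_of_exponent_le hd hp1
  have hD0 : 0 < D := by linarith
  have hDd : d ≤ D ^ (1 - α) := by
    have : (d ^ p) ^ (1 - α) ≤ D ^ (1 - α) := Real.rpow_le_rpow (by positivity) hdD hb.le
    rwa [← Real.rpow_mul hd0.le, hpb, Real.rpow_one] at this
  have hsd : Real.sqrt d ≤ d := by
    rw [Real.sqrt_le_left hd0.le]; nlinarith
  have hS : ∀ n : ℕ, 0 ≤ ∑ l ∈ Finset.Icc 1 n, η l := fun n =>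
    Finset.sum_nonneg fun i hi => (hη i (Finset.mem_Icc.1 hi).1).1.le
  have key : ∀ n : ℕ, f n ≤ K * D * (θ + ∑ l ∈ Finset.Icc 1 n, η l) ^ p := by
    intro n
    induction n with
    | zero =>
      simp only [Finset.Icc_eq_empty_of_lt zero_lt_one, Finset.sum_empty, add_zero]
      have : f 0 ≤ D := by have : 0 < d ^ p := by positivity
                           linarith
      nlinarith
    | succ n ih =>
      have hSn := hS n
      have hstep : c * η (n + 1) * (θ + ∑ l ∈ Finset.Icc 1 n, η l) ≤ 3 / 4 := by
        obtain ⟨h0, h1⟩ := hη (n + 1) (by omega)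
        have e1 : c * η (n + 1) * θ ≤ 1 / 2 := by
          rw [← hcθ]; nlinarith [mul_pos hc0 hθ0]
        have e2 : c * η (n + 1) * ∑ l ∈ Finset.Icc 1 n, η l ≤ 1 / 4 := by
          rcases hSn.eq_or_lt with h | h
          · rw [← h]; norm_num
          · have hn1 : 1 ≤ n := by
              by_contra hh
              have : n = 0 := by omega
              subst this
              simp at h
            have h2 := hs n hn1
            rw [le_div_iff₀ (by positivity)] at h2
            have h3 : 1 / 4 ≤ (1 - α) ^ 2 := by nlinarith
            have h4 : 0 ≤ c * η (n + 1) * ∑ l ∈ Finset.Icc 1 n, η l := by positivity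
            rw [hc] at h4 ⊢
            nlinarith [mul_le_mul_of_nonneg_right h3 h4]
        linarith
      rw [Finset.sum_Icc_succ_top (by omega), ← add_assoc]
      have hr := hrec n
      obtain ⟨h0, h1⟩ := hη (n + 1) (by omega)
      have hfn := hf n
      generalize η (n + 1) = e at *
      obtain ⟨x, hx⟩ : ∃ x : ℝ, x = θ + ∑ l ∈ Finset.Icc 1 n, η l := ⟨_, rfl⟩
      rw [← hx] at ih hstep ⊢
      have hxθ : θ ≤ x := by linarith
      have hx0 : 0 < x := by linarith
      obtain ⟨L, hL⟩ : ∃ L : ℝ, L = K * D * x ^ p := ⟨_, rfl⟩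
      have hL0 : 0 < L := by rw [hL]; positivity
      obtain ⟨R, hR⟩ : ∃ R : ℝ, R = K * D * x ^ (p - 1) := ⟨_, rfl⟩
      have hR0 : 0 < R := by rw [hR]; positivity
      have hLR : L = R * x := by
        rw [hL, hR, Real.rpow_sub_one hx0.ne']; field_simp
      rw [← hL] at ih
      have b1 : c * e * L ≤ 3 / 4 * R := by
        rw [hLR]; nlinarith
      have b2 : A * Real.sqrt d * f n ^ α ≤ 1 / 8 * R := by
        have g1 : f n ^ α ≤ L ^ α := Real.rpow_le_rpow hfn ih hα0
        have g2 : L = L ^ α * L ^ (1 - α) := by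
          rw [← Real.rpow_add hL0]; simp
        have g3 : L ^ (1 - α) = K ^ (1 - α) * D ^ (1 - α) * x := by
          rw [hL, Real.mul_rpow (by positivity) (by positivity),
            Real.mul_rpow hK0.le hD0.le, ← Real.rpow_mul hx0.le, hpb, Real.rpow_one]
        have g4 : R = L ^ α * (K ^ (1 - α) * D ^ (1 - α)) := by
          have : R * x = L ^ α * (K ^ (1 - α) * D ^ (1 - α)) * x := by
            rw [← hLR, mul_assoc, ← g3]; exact g2
          exact mul_right_cancel₀ hx0.ne' this
        have g5 : 8 * A * Real.sqrt d ≤ K ^ (1 - α) * D ^ (1 - α) :=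
          mul_le_mul hK3 (hsd.trans hDd) (Real.sqrt_nonneg _) (by positivity)
        have hLa : 0 < L ^ α := Real.rpow_pos_of_pos hL0 _
        have g6 : A * Real.sqrt d * f n ^ α ≤ A * Real.sqrt d * L ^ α :=
          mul_le_mul_of_nonneg_left g1 (by positivity)
        have g7 := mul_le_mul_of_nonneg_left g5 hLa.le
        rw [← g4] at g7
        linarith
      have b3 : C_V * (A ^ 2 + d) * e ≤ 1 / 8 * R := by
        have g1 : θ ^ (p - 1) ≤ x ^ (p - 1) := Real.rpow_le_rpow hθ0.le hxθ (by linarith)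
        have g2 : 8 * (C_V * (A ^ 2 + 1)) * D ≤ R := by
          have : 8 * (C_V * (A ^ 2 + 1)) ≤ K * x ^ (p - 1) :=
            hK2.trans (mul_le_mul_of_nonneg_left g1 hK0.le)
          have h9 := mul_le_mul_of_nonneg_right this hD0.le
          rw [hR]; linarith
        have g3 : A ^ 2 + d ≤ (A ^ 2 + 1) * D := by nlinarith [sq_nonneg A]
        have g4 := mul_le_mul_of_nonneg_left g3 hCV.le
        have g5 : C_V * (A ^ 2 + d) * e ≤ C_V * (A ^ 2 + d) * 1 :=
          mul_le_mul_of_nonneg_left h1 (by positivity)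
        linarith
      have b4 : L + R * e ≤ K * D * (x + e) ^ p := by
        have g1 : 1 + e / x ≤ (1 + e / x) ^ p := by
          simpa using Real.rpow_le_rpow_of_exponent_le
            (show 1 ≤ 1 + e / x by have : 0 < e / x := by positivity
                                   linarith) hp1
        have g2 : x + e = x * (1 + e / x) := by field_simp
        rw [g2, Real.mul_rpow hx0.le (by positivity), ← mul_assoc, ← hL]
        have g3 : L + R * e = L * (1 + e / x) := by rw [hLR]; field_simp
        rw [g3]
        exact mul_le_mul_of_nonneg_left g1 hL0.le
      have b5 : (1 + C_V * A ^ 2 * e ^ 2) * f n ≤ (1 + c * e ^ 2) * L := by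
        rw [← hc]; exact mul_le_mul_of_nonneg_left ih (by positivity)
      have b6 := mul_le_mul_of_nonneg_right (add_le_add (add_le_add b1 b2) b3) h0.le
      linarith
  have hSn := hS n
  refine (key n).trans ?_
  generalize ∑ l ∈ Finset.Icc 1 n, η l = S at *
  have h1 : (θ + S) ^ p ≤ (θ + 1) ^ p * max (S ^ p) 1 := by
    have hm : (max S 1) ^ p ≤ max (S ^ p) 1 := by
      rcases le_total S 1 with h | h
      · rw [max_eq_right h]; simp
      · rw [max_eq_left h]; exact le_max_left _ _
    have h2 : θ + S ≤ (θ + 1) * max S 1 := by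
      nlinarith [le_max_left S 1, le_max_right S 1]
    have h3 := Real.rpow_le_rpow (by positivity) h2 (by linarith : 0 ≤ p)
    rw [Real.mul_rpow (by positivity) (by positivity)] at h3
    exact h3.trans (mul_le_mul_of_nonneg_left hm (by positivity))
  have h2 := mul_le_mul_of_nonneg_left h1 (by positivity : 0 ≤ K * D)
  linarith
end

section
/- For every α ∈ [0,1/2] and every x ∈ (0,1], one has (1+x)^{−1/(1−α)} + x/(8(1−α)²) ≤ 1. -/
/-- For every `α ∈ [0,1/2]` and every `x ∈ (0,1]`,
`(1+x)^{−1/(1−α)} + x/(8(1−α)²) ≤ 1`. -/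
theorem statement_16 (α x : ℝ) (hα : α ∈ Set.Icc (0 : ℝ) (1 / 2))
    (hx : x ∈ Set.Ioc (0 : ℝ) 1) :
    (1 + x) ^ (-(1 / (1 - α))) + x / (8 * (1 - α) ^ 2) ≤ 1 := by
  obtain ⟨h0, h1⟩ := hα
  obtain ⟨hx0, hx1⟩ := hx
  have hpos : 0 < 1 - α := by linarith
  have e : x / (8 * (1 - α) ^ 2) = (1 / (1 - α)) ^ 2 * x / 8 := by
    field_simp
  have hp1 : 1 ≤ 1 / (1 - α) := by
    rw [le_div_iff₀ hpos]; linarith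
  have hp2 : 1 / (1 - α) ≤ 2 := by
    rw [div_le_iff₀ hpos]; linarith
  rw [e]
  generalize 1 / (1 - α) = p at *
  have hb : 1 + p * x ≤ (1 + x) ^ p :=
    one_add_mul_self_le_rpow_one_add (by linarith) hp1
  have hpx : 0 < p * x := by positivity
  have hpx2 : p * x ≤ 2 := by nlinarith
  rw [Real.rpow_neg (by linarith)]
  have h2 : ((1 + x) ^ p)⁻¹ ≤ (1 + p * x)⁻¹ := inv_anti₀ (by linarith) hb
  have h3 : (1 + p * x)⁻¹ ≤ 1 - p ^ 2 * x / 8 := by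
    rw [inv_le_iff_one_le_mul₀ (by linarith)]
    have h4 : p * (1 + p * x) ≤ 8 := by nlinarith
    nlinarith [mul_nonneg hpx.le (sub_nonneg.2 h4)]
  linarith
end
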